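/- Let G be a group with generating set X such that the Cayley graph Γ(G,X) is hyperbolic, and let H_1, H_2 be subgroups each hyperbolically embedded in (G,X). Then for every R ≥ 0, the Hausdorff distance with respect to d_X between the sets H_1 ∩ N_R(H_2) and H_1 ∩ H_2 is finite. -/

import Mathlib

open Pointwise

section BasicDefs

variable {G : Type*} [Group G]

/-- The word length of `g` with respect to the generating set `S`
(words use letters from `S ∪ S⁻¹`). -/
noncomputable def wordLength (S : Set G) (g : G) : ℕ :=
  sInf {n : ℕ | ∃ l : List G, l.length = n ∧ (∀ x ∈ l, x ∈ S ∨ x⁻¹ ∈ S) ∧ l.prod = g}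

/-- The word metric on `G` with respect to the generating set `S`. -/
noncomputable def wordDist (S : Set G) (g h : G) : ℝ :=
  (wordLength S (g⁻¹ * h) : ℝ)

/-- The closed `r`-neighborhood of a subset `A` with respect to the word metric `d_S`. -/
def nbhd (S : Set G) (r : ℝ) (A : Set G) : Set G :=
  {g : G | ∃ a ∈ A, wordDist S g a ≤ r}

/-- The distance between two subsets: the infimum of distances between their elements. -/
noncomputable def setDist (S : Set G) (A B : Set G) : ℝ :=
  sInf {r : ℝ | ∃ a ∈ A, ∃ b ∈ B, r = wordDist S a b}

/-- The conjugate subgroup `H^g = g H g⁻¹`. -/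
def conjSub (g : G) (H : Subgroup G) : Subgroup G :=
  H.map (MulAut.conj g).toMonoidHom

end BasicDefs

/-- `γ` restricted to `{0, …, n}` is a `(K, ε)`-quasigeodesic for the distance function `d`. -/
def IsQuasigeodesic {α : Type*} (d : α → α → ℝ) (K ε : ℝ) (n : ℕ) (γ : ℕ → α) : Prop :=
  ∀ i j : ℕ, i ≤ n → j ≤ n →
    (1 / K) * |(i : ℝ) - (j : ℝ)| - ε ≤ d (γ i) (γ j) ∧
      d (γ i) (γ j) ≤ K * |(i : ℝ) - (j : ℝ)| + ε

/-- `γ` restricted to `{0, …, n}` is a geodesic for the distance function `d`. -/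
def IsGeodesic {α : Type*} (d : α → α → ℝ) (n : ℕ) (γ : ℕ → α) : Prop :=
  ∀ i j : ℕ, i ≤ n → j ≤ n → d (γ i) (γ j) = |(i : ℝ) - (j : ℝ)|

/-- The path `γ` (on `{0, …, n}`) is `f`-stable: every `(K, ε)`-quasigeodesic with endpoints
on `γ` stays in the `f K ε`-neighborhood of `γ`. -/
def IsStablePath {α : Type*} (d : α → α → ℝ) (f : ℝ → ℝ → ℝ) (n : ℕ) (γ : ℕ → α) : Prop :=
  ∀ K ε : ℝ, 1 ≤ K → 0 ≤ ε → ∀ (m : ℕ) (η : ℕ → α),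
    IsQuasigeodesic d K ε m η →
    (∃ i ≤ n, η 0 = γ i) → (∃ i ≤ n, η m = γ i) →
    ∀ j ≤ m, ∃ i ≤ n, d (η j) (γ i) ≤ f K ε

/-- The Gromov product `⟨x, y⟩_w` with respect to a distance function `d`. -/
noncomputable def gromovProd {α : Type*} (d : α → α → ℝ) (w x y : α) : ℝ :=
  (d w x + d w y - d x y) / 2

/-- Gromov hyperbolicity of a distance function, via the four-point condition. -/
def IsHyperbolicDist {α : Type*} (d : α → α → ℝ) : Prop :=
  ∃ δ : ℝ, 0 ≤ δ ∧ ∀ w x y z : α,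
    min (gromovProd d w x y) (gromovProd d w y z) - δ ≤ gromovProd d w x z

section GroupDefs

variable {G : Type*} [Group G]

/-- `H` is a stable subgroup of `(G, d_S)` with stability function `f`: `H` has a finite
generating set `T` such that the inclusion `(H, d_T) → (G, d_S)` is a quasi-isometric
embedding sending every `d_T`-geodesic to an `f`-stable quasigeodesic of `(G, d_S)`. -/
def IsStableSubgroupWith (S : Set G) (H : Subgroup G) (f : ℝ → ℝ → ℝ) : Prop :=
  ∃ T : Set H, T.Finite ∧ Subgroup.closure T = ⊤ ∧
    (∃ μ c : ℝ, 1 ≤ μ ∧ 0 ≤ c ∧ ∀ h₁ h₂ : H,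
      (1 / μ) * wordDist T h₁ h₂ - c ≤ wordDist S (h₁ : G) (h₂ : G) ∧
        wordDist S (h₁ : G) (h₂ : G) ≤ μ * wordDist T h₁ h₂ + c) ∧
    ∀ (n : ℕ) (γ : ℕ → H), IsGeodesic (wordDist T) n γ →
      (∃ K ε : ℝ, 1 ≤ K ∧ 0 ≤ ε ∧
        IsQuasigeodesic (wordDist S) K ε n (fun i => (γ i : G))) ∧
      IsStablePath (wordDist S) f n (fun i => (γ i : G))

/-- `H` is a stable subgroup of `(G, d_S)`. -/
def IsStableSubgroup (S : Set G) (H : Subgroup G) : Prop :=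
  ∃ f : ℝ → ℝ → ℝ, IsStableSubgroupWith S H f

/-- The family `Q` of subgroups is hyperbolically embedded in `(G, X)`:
(Q1) geometric separation, (Q2) finite generation, (Q3) uniform quasi-isometric embedding. -/
def IsHypEmbFamily {G : Type*} [Group G] {ι : Type*} (X : Set G) (Q : ι → Subgroup G) : Prop :=
  (∀ ε : ℝ, 0 < ε → ∃ R : ℝ, ∀ (g : G) (i j : ι),
      (∃ a ∈ (Q i : Set G) ∩ nbhd X ε (g • (Q j : Set G)),
        ∃ b ∈ (Q i : Set G) ∩ nbhd X ε (g • (Q j : Set G)), R ≤ wordDist X a b) →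
      i = j ∧ g ∈ Q i) ∧
  ∃ Y : ι → Set G, (∀ i, (Y i).Finite ∧ Y i ⊆ (Q i : Set G) ∧ Subgroup.closure (Y i) = Q i) ∧
    ∃ μ c : ℝ, 1 ≤ μ ∧ 0 ≤ c ∧ ∀ i : ι, ∀ h ∈ Q i,
      (wordLength (Y i) h : ℝ) ≤ μ * (wordLength X h : ℝ) + c

/-- The subset `H` of `G` satisfies the WPD condition in `(G, X)`. -/
def WPDSet (X : Set G) (H : Set G) : Prop :=
  ∀ ε : ℝ, 0 < ε → ∃ N : ℝ, 0 < N ∧ ∀ h₁ h₂ : G, h₁ ∈ H → h₂ ∈ H →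
    N < wordDist X h₁ h₂ →
    {g : G | wordDist X h₁ (g * h₁) < ε ∧ wordDist X h₂ (g * h₂) < ε}.Finite

/-- A quasimorphism on `G`. -/
def IsQuasimorphism (q : G → ℝ) : Prop :=
  ∃ D : ℝ, 0 ≤ D ∧ ∀ x y : G, |q (x * y) - q x - q y| ≤ D

/-- A homogeneous quasimorphism on `G`. -/
def IsHomogeneousQM (q : G → ℝ) : Prop :=
  IsQuasimorphism q ∧ ∀ (x : G) (n : ℕ), q (x ^ n) = (n : ℝ) * q x

/-- `H` is a quasiconvex subgroup of `(G, d_S)`: every geodesic with endpoints in `H`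
lies in a uniformly bounded neighborhood of `H`. -/
def IsQuasiconvex (S : Set G) (H : Subgroup G) : Prop :=
  ∃ C : ℝ, 0 ≤ C ∧ ∀ (n : ℕ) (γ : ℕ → G), IsGeodesic (wordDist S) n γ →
    γ 0 ∈ H → γ n ∈ H → ∀ i ≤ n, ∃ h ∈ H, wordDist S (γ i) h ≤ C

end GroupDefs

/-!
Let `h ∈ H₁` lie `R`-close to `k ∈ H₂`. Hyperbolicity makes undistorted subgroups quasiconvex, so
at a fixed distance `T` from `h` a geodesic from `h` to `1` passes near some `a ∈ H₁` which is also
near `H₂`. The element `u = h⁻¹ * a` of `H₁` has length about `T`, so it takes only finitely many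
values. If `h` and `g` give the same `u`, then `H₂` and `h * g⁻¹ • H₂` are close to each other
both at `h` and at `h * u`; for `T` large, separation forces `h * g⁻¹ ∈ H₁ ∩ H₂`. Hence `h` is as
close to `H₁ ∩ H₂` as a representative `g` of its class is to `1`.
-/

open Filter Asymptotics

section GromovProduct

variable {α : Type*} {d : α → α → ℝ} {δ : ℝ}

/-- Gromov's four-point condition with a specified constant `δ`; see `IsHyperbolicDist` for the
version with an unspecified constant. -/
def IsHyperbolicDistWith (d : α → α → ℝ) (δ : ℝ) : Prop :=
  0 ≤ δ ∧ ∀ w x y z : α,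
    min (gromovProd d w x y) (gromovProd d w y z) - δ ≤ gromovProd d w x z

theorem IsHyperbolicDistWith.sub_le_gromovProd_of_chain (hd : IsHyperbolicDistWith d δ) (w : α)
    {B : ℝ} (k : ℕ) {p : ℕ → α} (hp : ∀ i < 2 ^ k, B ≤ gromovProd d w (p i) (p (i + 1))) :
    B - k * δ ≤ gromovProd d w (p 0) (p (2 ^ k)) := by
  induction k generalizing p with
  | zero => simpa using hp 0 (by simp)
  | succ k ih =>
    have hpow : 2 ^ (k + 1) = 2 ^ k + 2 ^ k := by rw [pow_succ, mul_two]
    have first_half : B - k * δ ≤ gromovProd d w (p 0) (p (2 ^ k)) :=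
      ih fun i hi => hp i (by omega)
    have second_half : B - k * δ ≤ gromovProd d w (p (2 ^ k)) (p (2 ^ k + 2 ^ k)) :=
      ih (p := fun i => p (2 ^ k + i)) fun i hi => hp (2 ^ k + i) (by omega)
    have := hd.2 w (p 0) (p (2 ^ k)) (p (2 ^ k + 2 ^ k))
    have := le_min first_half second_half
    rw [hpow]
    push_cast
    linarith

theorem IsGeodesic.gromovProd_eq_zero {n : ℕ} {γ : ℕ → α} (hγ : IsGeodesic d n γ) {i j k : ℕ}
    (hij : i ≤ j) (hjk : j ≤ k) (hkn : k ≤ n) : gromovProd d (γ j) (γ i) (γ k) = 0 := by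
  have hij' : (i : ℝ) ≤ j := by exact_mod_cast hij
  have hjk' : (j : ℝ) ≤ k := by exact_mod_cast hjk
  rw [gromovProd, hγ j i (by omega) (by omega), hγ j k (by omega) hkn, hγ i k (by omega) hkn,
    abs_of_nonneg (by linarith), abs_of_nonpos (by linarith), abs_of_nonpos (by linarith)]
  ring

end GromovProduct

section HyperbolicSpace

variable {α : Type*} [PseudoMetricSpace α] {δ : ℝ} {n : ℕ} {γ : ℕ → α} {A : Set α}

theorem gromovProd_dist_comm (w x y : α) : gromovProd dist w x y = gromovProd dist w y x := by
  rw [gromovProd, gromovProd, dist_comm x y]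
  ring

theorem isGeodesic_of_dist_succ_le_one (hstep : ∀ i, dist (γ i) (γ (i + 1)) ≤ 1)
    (hend : (n : ℝ) ≤ dist (γ 0) (γ n)) : IsGeodesic dist n γ := by
  have upper {i j : ℕ} (hij : i ≤ j) : dist (γ i) (γ j) ≤ j - i := by
    have := dist_le_Ico_sum_of_dist_le (f := γ) hij (d := fun _ => 1) fun _ _ => hstep _
    simpa [Nat.cast_sub hij] using this
  have of_le {i j : ℕ} (hij : i ≤ j) (hj : j ≤ n) : dist (γ i) (γ j) = j - i := by
    have := upper (Nat.zero_le i)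
    have := upper hj
    have := dist_triangle4 (γ 0) (γ i) (γ j) (γ n)
    exact le_antisymm (upper hij) (by push_cast at *; linarith)
  intro i j hi hj
  rcases le_total i j with hij | hji
  · rw [of_le hij hj, abs_sub_comm, abs_of_nonneg (sub_nonneg.2 (by exact_mod_cast hij))]
  · rw [dist_comm, of_le hji hi, abs_of_nonneg (sub_nonneg.2 (by exact_mod_cast hji))]

theorem IsGeodesic.exists_dist_le (hγ : IsGeodesic dist n γ)
    (hd : IsHyperbolicDistWith (dist : α → α → ℝ) δ) (x : α) :
    ∃ i ≤ n, dist x (γ i) ≤ gromovProd dist x (γ 0) (γ n) + 2 * δ + 1 := by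
  have hlen : dist (γ 0) (γ n) = n := by simpa using hγ 0 n n.zero_le le_rfl
  -- the point of `γ` whose distance to `γ 0` is that of the inner point of the comparison tripod
  let t := gromovProd dist (γ 0) x (γ n)
  have ht : t = (dist x (γ 0) + n - dist x (γ n)) / 2 := by
    simp only [t, gromovProd, hlen, dist_comm (γ 0) x]
  have t_nonneg : 0 ≤ t := by
    have := dist_triangle x (γ 0) (γ n)
    linarith
  have t_le : t ≤ n := by
    have := dist_triangle x (γ n) (γ 0)
    have := dist_comm (γ n) (γ 0)
    linarith
  have floor_le : (⌊t⌋₊ : ℝ) ≤ t := Nat.floor_le t_nonneg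
  have lt_floor : t < ⌊t⌋₊ + 1 := Nat.lt_floor_add_one t
  have hi : ⌊t⌋₊ ≤ n := Nat.floor_le_of_le t_le
  refine ⟨⌊t⌋₊, hi, ?_⟩
  have four_point := hd.2 (γ ⌊t⌋₊) (γ 0) x (γ n)
  rw [hγ.gromovProd_eq_zero (Nat.zero_le _) hi le_rfl] at four_point
  have dist_left : dist (γ ⌊t⌋₊) (γ 0) = ⌊t⌋₊ := by
    simpa using hγ ⌊t⌋₊ 0 hi n.zero_le
  have dist_right : dist (γ ⌊t⌋₊) (γ n) = n - ⌊t⌋₊ := by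
    rw [hγ ⌊t⌋₊ n hi le_rfl, abs_of_nonpos (by linarith)]
    ring
  have := dist_comm x (γ ⌊t⌋₊)
  have := dist_comm x (γ 0)
  rcases min_le_iff.1 (sub_nonpos.1 four_point) with h | h <;>
  · simp only [gromovProd] at h ⊢
    linarith

theorem IsHyperbolicDistWith.sub_le_gromovProd_of_far_chain
    (hd : IsHyperbolicDistWith (dist : α → α → ℝ) δ) {w : α} {p : ℕ → α} {D M : ℝ}
    (hfar : ∀ i, D ≤ dist w (p i)) (hstep : ∀ i, dist (p i) (p (i + 1)) ≤ M) (k : ℕ) :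
    D - M / 2 - k * δ ≤ gromovProd dist w (p 0) (p (2 ^ k)) := by
  refine hd.sub_le_gromovProd_of_chain w k fun i _ => ?_
  rw [gromovProd]
  linarith [hfar i, hfar (i + 1), hstep i]

theorem exists_mem_le_gromovProd {w x : α} {D : ℝ} (hfar : ∀ a ∈ A, D ≤ dist w a)
    (hnear : ∃ a ∈ A, dist x a ≤ D + 1) (hx : dist w x ≤ 2 * D + 1)
    (hx' : x ∈ A ∨ dist w x = 2 * D + 1) :
    ∃ a ∈ A, dist w a ≤ 3 * D + 2 ∧ D ≤ gromovProd dist w x a := by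
  rcases hx' with hxA | hwx
  · have hDx := hfar x hxA
    refine ⟨x, hxA, by linarith, ?_⟩
    rw [gromovProd, dist_self]
    linarith
  · obtain ⟨a, ha, hxa⟩ := hnear
    have := hfar a ha
    refine ⟨a, ha, by linarith [dist_triangle w x a], ?_⟩
    rw [gromovProd]
    linarith

theorem exists_le_abs_sub_eq (i s : ℕ) :
    ∃ l ≤ i, |(i : ℝ) - l| ≤ s ∧ (l = 0 ∨ |(i : ℝ) - l| = s) := by
  rcases le_total i s with h | h
  · exact ⟨0, i.zero_le, by simpa using h, Or.inl rfl⟩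
  · have : |(i : ℝ) - (i - s : ℕ)| = s := by
      rw [Nat.cast_sub h, sub_sub_cancel, Nat.abs_cast]
    exact ⟨i - s, Nat.sub_le i s, this.le, Or.inr this⟩

theorem exists_ge_abs_sub_eq {i n : ℕ} (hi : i ≤ n) (s : ℕ) :
    ∃ m ≥ i, m ≤ n ∧ |(i : ℝ) - m| ≤ s ∧ (m = n ∨ |(i : ℝ) - m| = s) := by
  rcases le_total n (i + s) with h | h
  · refine ⟨n, hi, le_rfl, ?_, Or.inl rfl⟩
    rw [abs_sub_comm, ← Nat.cast_sub hi, Nat.abs_cast]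
    exact_mod_cast Nat.sub_le_iff_le_add'.2 h
  · have : |(i : ℝ) - (i + s : ℕ)| = s := by
      rw [Nat.cast_add, sub_add_cancel_left, abs_neg, Nat.abs_cast]
    exact ⟨i + s, Nat.le_add_right i s, h, this.le, Or.inr this⟩

theorem IsGeodesic.exists_gromovProd_le_of_farthest (hγ : IsGeodesic dist n γ)
    (hd : IsHyperbolicDistWith (dist : α → α → ℝ) δ) (h0 : γ 0 ∈ A) (hn : γ n ∈ A) {i D : ℕ}
    (hi : i ≤ n) (hfar : ∀ a ∈ A, (D : ℝ) ≤ dist (γ i) a)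
    (hnear : ∀ j ≤ n, ∃ a ∈ A, dist (γ j) a ≤ D + 1) :
    ∃ u ∈ A, ∃ v ∈ A, dist u v ≤ 6 * D + 4 ∧
      min (D : ℝ) (gromovProd dist (γ i) u v) ≤ 2 * δ := by
  have near_of_step {j : ℕ} (hj : j ≤ n) (hij : |(i : ℝ) - j| ≤ 2 * D + 1)
      (hj' : γ j ∈ A ∨ |(i : ℝ) - j| = 2 * D + 1) :
      ∃ a ∈ A, dist (γ i) a ≤ 3 * D + 2 ∧ D ≤ gromovProd dist (γ i) (γ j) a :=
    exists_mem_le_gromovProd hfar (hnear j hj) (by rwa [hγ i j hi hj]) (by rwa [hγ i j hi hj])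
  obtain ⟨l, hli, hl, hl'⟩ := exists_le_abs_sub_eq i (2 * D + 1)
  obtain ⟨m, him, hmn, hm, hm'⟩ := exists_ge_abs_sub_eq hi (2 * D + 1)
  push_cast at hl hl' hm hm'
  obtain ⟨u, hu, hwu, hlu⟩ := near_of_step (hli.trans hi) hl (hl'.imp_left fun h => by rwa [h])
  obtain ⟨v, hv, hwv, hmv⟩ := near_of_step hmn hm (hm'.imp_left fun h => by rwa [h])
  refine ⟨u, hu, v, hv, by linarith [dist_triangle_left u v (γ i)], ?_⟩
  have on_geodesic := hγ.gromovProd_eq_zero hli him hmn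
  have four_point_l := hd.2 (γ i) (γ l) u (γ m)
  have four_point_m := hd.2 (γ i) u v (γ m)
  rw [gromovProd_dist_comm _ v] at four_point_m
  grind

/-- Any two points of `A` are joined inside `A` by a chain with uniformly bounded steps, whose
length is at most linear in the distance of its ends. Chains are indexed by `ℕ` and become
constant, which lets them be prolonged to a length that is a power of two. -/
def HasLinearChains (d : α → α → ℝ) (A : Set α) : Prop :=
  ∃ M μ c : ℝ, 0 ≤ μ ∧ ∀ u ∈ A, ∀ v ∈ A, ∃ p : ℕ → α, p 0 = u ∧
    (∀ m : ℕ, μ * d u v + c ≤ m → p m = v) ∧ (∀ i, p i ∈ A) ∧ ∀ i, d (p i) (p (i + 1)) ≤ M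

theorem eventually_linear_le_two_pow (a b : ℝ) :
    ∀ᶠ k : ℕ in atTop, a * k + b ≤ (2 : ℝ) ^ k := by
  have linear : (fun k : ℕ => a * (k : ℝ)) =o[atTop] fun k => (2 : ℝ) ^ k :=
    (isLittleO_coe_const_pow_of_one_lt one_lt_two).const_mul_left a
  have const : (fun _ : ℕ => b) =o[atTop] fun k => (2 : ℝ) ^ k :=
    isLittleO_const_left.2 <| Or.inr <|
      tendsto_norm_atTop_atTop.comp (tendsto_pow_atTop_atTop_of_one_lt one_lt_two)
  filter_upwards [(linear.add const).bound one_pos] with k hk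
  have := (le_abs_self _).trans hk
  rwa [one_mul, Real.norm_of_nonneg (by positivity)] at this

theorem exists_forall_le_of_logarithmic_growth (a c : ℝ) {μ δ : ℝ} (hμ : 0 ≤ μ) (hδ : 0 ≤ δ) :
    ∃ C, ∀ r : ℝ, (∀ k : ℕ, μ * r + c ≤ 2 ^ k → r ≤ a + k * δ) → r ≤ C := by
  obtain ⟨K, hK⟩ := eventually_atTop.1 <|
    eventually_linear_le_two_pow (μ * (δ + 1)) (μ * (a + (δ + 1)) + c)
  refine ⟨a + (K + 1) * (δ + 1), fun r hr => ?_⟩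
  by_contra! hlt
  let k := ⌊(r - a) / (δ + 1)⌋₊
  have hKk : K + 1 ≤ k := by
    refine Nat.le_floor ((le_div_iff₀ (by positivity)).2 ?_)
    push_cast
    linarith
  have hk_le : k * (δ + 1) ≤ r - a := by
    refine (le_div_iff₀ (by positivity)).1 (Nat.floor_le ?_)
    exact div_nonneg (by nlinarith [K.cast_nonneg (α := ℝ)]) (by positivity)
  have hk_lt : r - a < (k + 1) * (δ + 1) :=
    (div_lt_iff₀ (by positivity)).1 (Nat.lt_floor_add_one _)
  have : μ * r ≤ μ * (a + (k + 1) * (δ + 1)) := by gcongr; linarith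
  have := hr k (by linarith [hK k (by omega)])
  have : (1 : ℝ) ≤ k := by exact_mod_cast (Nat.le_add_left 1 K).trans hKk
  linarith

theorem exists_almost_farthest (hγ0 : γ 0 ∈ A) (n : ℕ) :
    ∃ i ≤ n, ∃ D : ℕ, (∀ a ∈ A, (D : ℝ) ≤ dist (γ i) a) ∧
      ∀ j ≤ n, ∃ a ∈ A, dist (γ j) a ≤ D + 1 := by
  obtain ⟨i, hi, hmax⟩ := (Finset.range (n + 1)).exists_max_image
    (fun j => ⌊Metric.infDist (γ j) A⌋₊) ⟨0, by simp⟩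
  refine ⟨i, by simpa [Nat.lt_succ_iff] using hi, ⌊Metric.infDist (γ i) A⌋₊, fun a ha => ?_,
    fun j hj => ?_⟩
  · exact (Nat.floor_le Metric.infDist_nonneg).trans (Metric.infDist_le_dist_of_mem ha)
  · have floor_le : ⌊Metric.infDist (γ j) A⌋₊ ≤ ⌊Metric.infDist (γ i) A⌋₊ :=
      hmax j (by simpa [Nat.lt_succ_iff] using hj)
    have hlt : Metric.infDist (γ j) A < ⌊Metric.infDist (γ i) A⌋₊ + 1 :=
      (Nat.lt_floor_add_one _).trans_le (by gcongr)
    obtain ⟨a, ha, hja⟩ := (Metric.infDist_lt_iff ⟨_, hγ0⟩).1 hlt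
    exact ⟨a, ha, hja.le⟩

theorem HasLinearChains.exists_dist_le (hA : HasLinearChains dist A)
    (hhyp : IsHyperbolicDist (dist : α → α → ℝ)) :
    ∃ C, 0 ≤ C ∧ ∀ (n : ℕ) (γ : ℕ → α), IsGeodesic dist n γ → γ 0 ∈ A → γ n ∈ A →
      ∀ i ≤ n, ∃ a ∈ A, dist (γ i) a ≤ C := by
  obtain ⟨δ, hd⟩ : ∃ δ, IsHyperbolicDistWith dist δ := hhyp
  obtain ⟨M, μ, c, hμ, hchain⟩ := hA
  have hδ := hd.1
  obtain ⟨C, hC⟩ := exists_forall_le_of_logarithmic_growth (max 0 (M / 2) + 2 * δ)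
    (μ * 4 + c) (mul_nonneg hμ (by norm_num : (0 : ℝ) ≤ 6)) hδ
  refine ⟨max C 0 + 1, by positivity, fun n γ hγ h0 hn j hj => ?_⟩
  obtain ⟨i, hi, D, hfar, hnear⟩ := exists_almost_farthest h0 n
  obtain ⟨u, hu, v, hv, huv, hgp⟩ := hγ.exists_gromovProd_le_of_farthest hd h0 hn hi hfar hnear
  have hD : (D : ℝ) ≤ C := by
    refine hC D fun k hk => ?_
    obtain ⟨p, rfl, hpv, hpA, hstep⟩ := hchain u hu v hv
    have : μ * dist (p 0) v ≤ μ * (6 * D + 4) := by gcongr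
    have hend : p (2 ^ k) = v := hpv _ (by push_cast; linarith)
    have hlower := hd.sub_le_gromovProd_of_far_chain (fun i => hfar _ (hpA i)) hstep k
    rw [hend] at hlower
    have := le_max_left 0 (M / 2)
    have := le_max_right 0 (M / 2)
    have : 0 ≤ k * δ := by positivity
    rcases min_le_iff.1 hgp with h | h <;> linarith
  obtain ⟨a, ha, hja⟩ := hnear j hj
  exact ⟨a, ha, by linarith [le_max_left C 0]⟩

end HyperbolicSpace

section WordMetric

variable {G : Type*} [Group G] {S : Set G}

theorem wordLength_prod_le {l : List G} (hl : ∀ x ∈ l, x ∈ S ∨ x⁻¹ ∈ S) :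
    wordLength S l.prod ≤ l.length :=
  Nat.sInf_le ⟨l, rfl, hl, rfl⟩

theorem exists_list_of_wordLength {g : G} (hg : g ∈ Subgroup.closure S) :
    ∃ l : List G, l.length = wordLength S g ∧ (∀ x ∈ l, x ∈ S ∨ x⁻¹ ∈ S) ∧ l.prod = g := by
  rw [← Subgroup.mem_toSubmonoid, Subgroup.closure_toSubmonoid] at hg
  obtain ⟨l, hl, hprod⟩ := Submonoid.exists_list_of_mem_closure hg
  have hne : {n : ℕ | ∃ l : List G, l.length = n ∧ (∀ x ∈ l, x ∈ S ∨ x⁻¹ ∈ S) ∧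
      l.prod = g}.Nonempty := ⟨l.length, l, rfl, hl, hprod⟩
  exact Nat.sInf_mem hne

@[simp]
theorem wordLength_one : wordLength S (1 : G) = 0 := by
  simpa using wordLength_prod_le (S := S) (l := []) (by simp)

theorem wordLength_le_one {s : G} (hs : s ∈ insert 1 (S ∪ S⁻¹)) : wordLength S s ≤ 1 := by
  rcases hs with rfl | hs
  · simp
  · simpa using wordLength_prod_le (l := [s]) (by simpa using hs)

theorem wordLength_mul_le (hS : Subgroup.closure S = ⊤) (g h : G) :
    wordLength S (g * h) ≤ wordLength S g + wordLength S h := by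
  obtain ⟨l, hl_len, hl, rfl⟩ := exists_list_of_wordLength (S := S) (g := g) (by simp [hS])
  obtain ⟨m, hm_len, hm, rfl⟩ := exists_list_of_wordLength (S := S) (g := h) (by simp [hS])
  rw [← hl_len, ← hm_len, ← List.prod_append, ← List.length_append]
  exact wordLength_prod_le fun x hx => (List.mem_append.1 hx).elim (hl x) (hm x)

theorem wordLength_inv (S : Set G) (g : G) : wordLength S g⁻¹ = wordLength S g := by
  have inv_word {h : G} {k : ℕ} :
      (∃ l : List G, l.length = k ∧ (∀ x ∈ l, x ∈ S ∨ x⁻¹ ∈ S) ∧ l.prod = h) →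
        ∃ l : List G, l.length = k ∧ (∀ x ∈ l, x ∈ S ∨ x⁻¹ ∈ S) ∧ l.prod = h⁻¹ := by
    rintro ⟨l, rfl, hl, rfl⟩
    refine ⟨(l.map (·⁻¹)).reverse, by simp, fun x hx => ?_, (List.prod_inv_reverse l).symm⟩
    obtain ⟨y, hy, rfl⟩ := List.mem_map.1 (List.mem_reverse.1 hx)
    simpa [or_comm] using hl y hy
  exact congrArg sInf (Set.ext fun k => ⟨fun h => inv_inv g ▸ inv_word h, inv_word⟩)

theorem wordDist_self (g : G) : wordDist S g g = 0 := by
  simp [wordDist]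

theorem wordDist_mul_right (g u : G) : wordDist S g (g * u) = wordLength S u := by
  rw [wordDist, inv_mul_cancel_left]

theorem wordDist_one (g : G) : wordDist S g 1 = wordLength S g := by
  rw [wordDist, mul_one, wordLength_inv]

theorem wordDist_mul_left (g h k : G) : wordDist S (g * h) (g * k) = wordDist S h k := by
  rw [wordDist, wordDist, mul_inv_rev, mul_assoc, inv_mul_cancel_left]

theorem wordDist_comm (g h : G) : wordDist S g h = wordDist S h g := by
  rw [wordDist, wordDist, ← wordLength_inv, mul_inv_rev, inv_inv]

theorem wordDist_triangle (hS : Subgroup.closure S = ⊤) (g h k : G) :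
    wordDist S g k ≤ wordDist S g h + wordDist S h k := by
  have := wordLength_mul_le hS (g⁻¹ * h) (h⁻¹ * k)
  rw [mul_assoc, mul_inv_cancel_left] at this
  simp only [wordDist]
  exact_mod_cast this

/-- The word metric as a pseudometric space structure, through which the metric geometry of this
file applies to groups. It is not an instance, as it depends on the generating set. -/
noncomputable abbrev wordPseudoMetricSpace (hS : Subgroup.closure S = ⊤) :
    PseudoMetricSpace G where
  dist := wordDist S
  dist_self := wordDist_self
  dist_comm := wordDist_comm
  dist_triangle := wordDist_triangle hS

theorem exists_word_path {u v : G} (huv : u⁻¹ * v ∈ Subgroup.closure S) :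
    ∃ p : ℕ → G, p 0 = u ∧ (∀ m, wordLength S (u⁻¹ * v) ≤ m → p m = v) ∧
      ∀ i, (p i)⁻¹ * p (i + 1) ∈ insert 1 (S ∪ S⁻¹) := by
  obtain ⟨l, hlen, hl, hprod⟩ := exists_list_of_wordLength huv
  refine ⟨fun i => u * (l.take i).prod, by simp, fun m hm => ?_, fun i => ?_⟩
  · simp only [List.take_of_length_le (hlen.trans_le hm), hprod, mul_inv_cancel_left]
  · rcases lt_or_ge i l.length with hi | hi
    · have hletter : l[i] ∈ S ∪ S⁻¹ := hl _ (List.getElem_mem hi)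
      simpa [List.prod_take_succ l i hi, mul_assoc] using Or.inr hletter
    · simp [List.take_of_length_le hi, List.take_of_length_le (hi.trans i.le_succ)]

theorem exists_isGeodesic (hS : Subgroup.closure S = ⊤) (u v : G) :
    ∃ γ : ℕ → G, IsGeodesic (wordDist S) (wordLength S (u⁻¹ * v)) γ ∧ γ 0 = u ∧
      γ (wordLength S (u⁻¹ * v)) = v := by
  let := wordPseudoMetricSpace hS
  obtain ⟨γ, h0, hend, hstep⟩ := exists_word_path (S := S) (u := u) (v := v) (by simp [hS])
  have hγ : IsGeodesic dist (wordLength S (u⁻¹ * v)) γ := by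
    refine isGeodesic_of_dist_succ_le_one (fun i => ?_) ?_
    · change (wordLength S ((γ i)⁻¹ * γ (i + 1)) : ℝ) ≤ 1
      exact_mod_cast wordLength_le_one (hstep i)
    · rw [h0, hend _ le_rfl]
      exact le_rfl
  exact ⟨γ, hγ, h0, hend _ le_rfl⟩

theorem finite_wordLength_le (hS : S.Finite) (n : ℕ) :
    {g : G | g ∈ Subgroup.closure S ∧ wordLength S g ≤ n}.Finite := by
  have finite_letters : (insert 1 (S ∪ S⁻¹)).Finite := (hS.union hS.inv).insert 1
  have finite_pow : ((insert 1 (S ∪ S⁻¹)) ^ n).Finite := by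
    induction n with
    | zero => simp
    | succ n ih => exact pow_succ (insert 1 (S ∪ S⁻¹)) n ▸ ih.mul finite_letters
  refine finite_pow.subset fun g ⟨hg, hgn⟩ => ?_
  obtain ⟨p, h0, hend, hstep⟩ := exists_word_path (S := S) (u := 1) (v := g) (by simpa using hg)
  have mem_pow (i : ℕ) : p i ∈ (insert 1 (S ∪ S⁻¹)) ^ i := by
    induction i with
    | zero => simp [h0]
    | succ i ih => simpa [pow_succ] using Set.mul_mem_mul ih (hstep i)
  rw [← hend n (by simpa using hgn)]
  exact mem_pow n

theorem nbhd_mono {r s : ℝ} (hrs : r ≤ s) (A : Set G) : nbhd S r A ⊆ nbhd S s A :=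
  fun _ ⟨a, ha, hga⟩ => ⟨a, ha, hga.trans hrs⟩

theorem subset_nbhd {r : ℝ} (hr : 0 ≤ r) (A : Set G) : A ⊆ nbhd S r A :=
  fun a ha => ⟨a, ha, by rwa [wordDist_self]⟩

theorem exists_biUnion_subset_nbhd {ι : Type*} {F : Set ι} (hF : F.Finite) {A : ι → Set G}
    {B : Set G} (h : ∀ i ∈ F, ∃ r, A i ⊆ nbhd S r B) : ∃ r, ⋃ i ∈ F, A i ⊆ nbhd S r B := by
  choose! r hr using h
  obtain ⟨s, hs⟩ := (hF.image r).bddAbove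
  exact ⟨s, Set.iUnion₂_subset fun i hi =>
    (hr i hi).trans (nbhd_mono (hs (Set.mem_image_of_mem r hi)) B)⟩

theorem exists_subset_nbhd_of_mul_inv_mem {A B : Set G} (h : ∀ a ∈ A, ∀ b ∈ A, a * b⁻¹ ∈ B) :
    ∃ r, A ⊆ nbhd S r B := by
  rcases A.eq_empty_or_nonempty with rfl | ⟨b, hb⟩
  · exact ⟨0, Set.empty_subset _⟩
  · exact ⟨wordLength S b⁻¹, fun a ha => ⟨a * b⁻¹, h a ha b hb, (wordDist_mul_right a b⁻¹).le⟩⟩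

end WordMetric

section Subgroups

variable {G : Type*} [Group G] {X : Set G} {H H₁ H₂ : Subgroup G}

/-- `H` is generated by a finite set with respect to which word lengths are bounded linearly in
terms of word lengths with respect to `X`: conditions (Q2) and (Q3) for a single subgroup. -/
def IsUndistorted (X : Set G) (H : Subgroup G) : Prop :=
  ∃ Y : Set G, Y.Finite ∧ Subgroup.closure Y = H ∧ ∃ μ c : ℝ, 0 ≤ μ ∧
    ∀ h ∈ H, (wordLength Y h : ℝ) ≤ μ * (wordLength X h : ℝ) + c

/-- Only the translates of `H` by its own elements are close to `H` along subsets of large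
diameter: condition (Q1) for a single subgroup. -/
def IsGeometricallySeparated (X : Set G) (H : Subgroup G) : Prop :=
  ∀ ε : ℝ, 0 < ε → ∃ R : ℝ, ∀ g : G,
    (∃ a ∈ (H : Set G) ∩ nbhd X ε (g • (H : Set G)),
      ∃ b ∈ (H : Set G) ∩ nbhd X ε (g • (H : Set G)), R ≤ wordDist X a b) → g ∈ H

theorem IsHypEmbFamily.isGeometricallySeparated {ι : Type*} {Q : ι → Subgroup G}
    (hQ : IsHypEmbFamily X Q) (i : ι) : IsGeometricallySeparated X (Q i) := fun ε hε =>
  let ⟨R, hR⟩ := hQ.1 ε hε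
  ⟨R, fun g hg => (hR g i i hg).2⟩

theorem IsHypEmbFamily.isUndistorted {ι : Type*} {Q : ι → Subgroup G}
    (hQ : IsHypEmbFamily X Q) (i : ι) : IsUndistorted X (Q i) :=
  let ⟨Y, hY, μ, c, hμ, _, hle⟩ := hQ.2
  ⟨Y i, (hY i).1, (hY i).2.2, μ, c, zero_le_one.trans hμ, hle i⟩

theorem IsUndistorted.finite_wordLength_le (hH : IsUndistorted X H) (n : ℕ) :
    {h : G | h ∈ H ∧ wordLength X h ≤ n}.Finite := by
  obtain ⟨Y, hY, rfl, μ, c, hμ, hle⟩ := hH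
  obtain ⟨m, hm⟩ := exists_nat_ge (μ * n + c)
  refine (_root_.finite_wordLength_le hY m).subset fun h ⟨hh, hhn⟩ => ⟨hh, ?_⟩
  have : (wordLength Y h : ℝ) ≤ m :=
    calc (wordLength Y h : ℝ) ≤ μ * wordLength X h + c := hle h hh
      _ ≤ μ * n + c := by gcongr
      _ ≤ m := hm
  exact_mod_cast this

theorem IsUndistorted.hasLinearChains (hH : IsUndistorted X H) :
    HasLinearChains (wordDist X) (H : Set G) := by
  obtain ⟨Y, hY, rfl, μ, c, hμ, hle⟩ := hH
  obtain ⟨M, hM⟩ :=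
    (((hY.union hY.inv).insert 1).image fun s => (wordLength X s : ℝ)).bddAbove
  refine ⟨M, μ, c, hμ, fun u hu v hv => ?_⟩
  have huv : u⁻¹ * v ∈ Subgroup.closure Y := mul_mem (inv_mem hu) hv
  obtain ⟨p, h0, hend, hstep⟩ := exists_word_path huv
  refine ⟨p, h0, fun m hm => hend m ?_, fun i => ?_, fun i =>
    hM (Set.mem_image_of_mem _ (hstep i))⟩
  · exact_mod_cast (hle _ huv).trans hm
  · have letters_subset : insert 1 (Y ∪ Y⁻¹) ⊆ (Subgroup.closure Y : Set G) :=
      Set.insert_subset (one_mem _) <| Set.union_subset Subgroup.subset_closure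
        fun y hy => by simpa using Subgroup.subset_closure hy
    induction i with
    | zero => rwa [h0]
    | succ i ih =>
      simpa only [mul_inv_cancel_left, SetLike.mem_coe] using
        mul_mem ih (letters_subset (hstep i))

theorem IsUndistorted.isQuasiconvex (hX : Subgroup.closure X = ⊤)
    (hhyp : IsHyperbolicDist (wordDist X)) (hH : IsUndistorted X H) : IsQuasiconvex X H :=
  let := wordPseudoMetricSpace hX
  HasLinearChains.exists_dist_le hH.hasLinearChains hhyp

theorem IsQuasiconvex.exists_wordDist_le (hX : Subgroup.closure X = ⊤)
    (hhyp : IsHyperbolicDist (wordDist X)) (hH : IsQuasiconvex X H) (E : ℝ) :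
    ∃ C, ∀ a ∈ H, ∀ b ∈ H, ∀ x, gromovProd (wordDist X) x a b ≤ E →
      ∃ h ∈ H, wordDist X x h ≤ C := by
  let := wordPseudoMetricSpace hX
  obtain ⟨δ, hd⟩ : ∃ δ, IsHyperbolicDistWith (dist : G → G → ℝ) δ := hhyp
  obtain ⟨C, -, hC⟩ := hH
  refine ⟨E + 2 * δ + 1 + C, fun a ha b hb x hx => ?_⟩
  obtain ⟨γ, hγ, h0, hend⟩ := exists_isGeodesic hX a b
  obtain ⟨i, hi, hxi⟩ := IsGeodesic.exists_dist_le hγ hd x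
  obtain ⟨h, hh, hih⟩ := hC _ γ hγ (h0 ▸ ha) (by rwa [hend]) i hi
  rw [h0, hend] at hxi
  refine ⟨h, hh, (wordDist_triangle hX x (γ i) h).trans (add_le_add (hxi.trans ?_) hih)⟩
  gcongr
  exact hx

theorem exists_mem_nbhd_at_distance (hX : Subgroup.closure X = ⊤)
    (hhyp : IsHyperbolicDist (wordDist X)) (hH₁ : IsQuasiconvex X H₁)
    (hH₂ : IsQuasiconvex X H₂) (R : ℝ) :
    ∃ C, ∀ h ∈ (H₁ : Set G) ∩ nbhd X R H₂, ∀ t ≤ wordLength X h,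
      ∃ a ∈ (H₁ : Set G) ∩ nbhd X C H₂, |wordDist X h a - t| ≤ C := by
  obtain ⟨C₁, -, near₁⟩ := hH₁
  obtain ⟨C₂, near₂⟩ := hH₂.exists_wordDist_le hX hhyp R
  have triangle := wordDist_triangle hX
  refine ⟨C₁ + C₂, fun h ⟨hh, k, hk, hhk⟩ t ht => ?_⟩
  obtain ⟨γ, hγ, h0, hend⟩ := exists_isGeodesic hX h 1
  rw [mul_one, wordLength_inv] at hγ hend
  have dist_start : wordDist X h (γ t) = t := by
    simpa [h0] using hγ 0 t (Nat.zero_le _) ht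
  have dist_end : wordDist X (γ t) 1 = wordDist X h 1 - t := by
    have ht' : (t : ℝ) ≤ wordLength X h := by exact_mod_cast ht
    rw [← hend, hγ t _ ht le_rfl, hend, wordDist_one, abs_of_nonpos (by linarith)]
    ring
  obtain ⟨a, ha, hta⟩ := near₁ _ γ hγ (h0 ▸ hh) (hend ▸ one_mem H₁) t ht
  obtain ⟨b, hb, htb⟩ := near₂ k hk 1 (one_mem H₂) (γ t) <| by
    rw [gromovProd]
    linarith [triangle (γ t) h k, triangle h k 1, wordDist_comm (S := X) (γ t) h]
  have hC₂ : 0 ≤ C₂ := (Nat.cast_nonneg _).trans htb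
  have := wordDist_comm (S := X) a (γ t)
  refine ⟨a, ⟨ha, b, hb, by linarith [triangle a (γ t) b]⟩, abs_le.2 ⟨?_, ?_⟩⟩
  · linarith [triangle h a (γ t)]
  · linarith [triangle h (γ t) a]

theorem exists_mem_inter_nbhd_smul (hX : Subgroup.closure X = ⊤) {C : ℝ} {h g : G}
    (hh : h ∈ nbhd X C H) (hg : g ∈ nbhd X C H) :
    ∃ k ∈ (H : Set G) ∩ nbhd X (2 * C) ((h * g⁻¹) • (H : Set G)), wordDist X h k ≤ C := by
  obtain ⟨k, hk, hhk⟩ := hh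
  obtain ⟨l, hl, hgl⟩ := hg
  refine ⟨k, ⟨hk, h * g⁻¹ * l, Set.smul_mem_smul_set hl, ?_⟩, hhk⟩
  have translate : wordDist X h (h * g⁻¹ * l) = wordDist X g l := by
    simpa using wordDist_mul_left (S := X) (h * g⁻¹) g l
  linarith [wordDist_triangle hX k h (h * g⁻¹ * l), wordDist_comm (S := X) k h]

theorem IsGeometricallySeparated.exists_mul_inv_mem (hX : Subgroup.closure X = ⊤)
    (hH : IsGeometricallySeparated X H) (C : ℝ) :
    ∃ D : ℝ, ∀ h ∈ nbhd X C H, ∀ g ∈ nbhd X C H, ∀ u, h * u ∈ nbhd X C H →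
      g * u ∈ nbhd X C H → D ≤ wordLength X u → h * g⁻¹ ∈ H := by
  obtain ⟨R, hR⟩ := hH (max (2 * C) 1) (by positivity)
  refine ⟨R + 2 * C, fun h hh g hg u hhu hgu hu => hR _ ?_⟩
  obtain ⟨k, ⟨hkH, hk⟩, hhk⟩ := exists_mem_inter_nbhd_smul hX hh hg
  obtain ⟨l, ⟨hlH, hl⟩, hul⟩ := exists_mem_inter_nbhd_smul hX hhu hgu
  rw [mul_inv_rev, mul_assoc, mul_inv_cancel_left] at hl
  refine ⟨k, ⟨hkH, nbhd_mono (le_max_left _ _) _ hk⟩,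
    l, ⟨hlH, nbhd_mono (le_max_left _ _) _ hl⟩, ?_⟩
  have := wordDist_mul_right (S := X) h u
  have := wordDist_comm (S := X) l (h * u)
  linarith [wordDist_triangle hX h k (h * u), wordDist_triangle hX k l (h * u)]

theorem exists_inter_nbhd_subset_nbhd_inter (hX : Subgroup.closure X = ⊤)
    (hhyp : IsHyperbolicDist (wordDist X)) (hq₁ : IsQuasiconvex X H₁)
    (hfin₁ : ∀ n : ℕ, {h : G | h ∈ H₁ ∧ wordLength X h ≤ n}.Finite)
    (hq₂ : IsQuasiconvex X H₂) (hsep₂ : IsGeometricallySeparated X H₂) (R : ℝ) :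
    ∃ r, (H₁ : Set G) ∩ nbhd X R H₂ ⊆ nbhd X r ((H₁ : Set G) ∩ H₂) := by
  obtain ⟨C₀, at_distance⟩ := exists_mem_nbhd_at_distance hX hhyp hq₁ hq₂ R
  let C := max C₀ R
  obtain ⟨D, mul_inv_mem⟩ := hsep₂.exists_mul_inv_mem hX C
  obtain ⟨T, hT⟩ := exists_nat_ge (D + C)
  obtain ⟨L, hL⟩ := exists_nat_ge (T + C)
  let F : Set G := {u | (u ∈ H₁ ∧ wordLength X u ≤ L) ∧ D ≤ wordLength X u}
  let A (u : G) : Set G := {h | h ∈ H₁ ∧ h ∈ nbhd X C H₂ ∧ h * u ∈ nbhd X C H₂}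
  obtain ⟨r, hr⟩ : ∃ r, ⋃ u ∈ F, A u ⊆ nbhd X r ((H₁ : Set G) ∩ H₂) :=
    exists_biUnion_subset_nbhd ((hfin₁ L).subset fun _ hu => hu.1) fun u hu =>
      exists_subset_nbhd_of_mul_inv_mem fun h hh g hg => ⟨mul_mem hh.1 (inv_mem hg.1),
        mul_inv_mem h hh.2.1 g hg.2.1 u hh.2.2 hg.2.2 hu.2⟩
  refine ⟨max r T, fun h hh => ?_⟩
  rcases le_total (wordLength X h) T with hhT | hTh
  · refine ⟨1, ⟨one_mem H₁, one_mem H₂⟩, ?_⟩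
    rw [wordDist_one]
    exact le_max_of_le_right (by exact_mod_cast hhT)
  · obtain ⟨a, ⟨haH, ha⟩, hha⟩ := at_distance h hh T hTh
    have length_le : (wordLength X (h⁻¹ * a) : ℝ) ≤ T + C := by
      have : wordDist X h a - T ≤ C₀ := (abs_le.1 hha).2
      rw [wordDist] at this
      linarith [le_max_left C₀ R]
    have le_length : T - C ≤ (wordLength X (h⁻¹ * a) : ℝ) := by
      have : -C₀ ≤ wordDist X h a - T := (abs_le.1 hha).1
      rw [wordDist] at this
      linarith [le_max_left C₀ R]
    have hF : h⁻¹ * a ∈ F :=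
      ⟨⟨mul_mem (inv_mem hh.1) haH, by exact_mod_cast length_le.trans hL⟩, by linarith⟩
    have hA : h ∈ A (h⁻¹ * a) := ⟨hh.1, nbhd_mono (le_max_right _ _) _ hh.2, by
      rw [mul_inv_cancel_left]
      exact nbhd_mono (le_max_left _ _) _ ha⟩
    exact nbhd_mono (le_max_left _ _) _ (hr (Set.mem_biUnion hF hA))

end Subgroups

theorem coarse_intersection_eq_intersection_general {G : Type*} [Group G] (X : Set G)
    (hXgen : Subgroup.closure X = ⊤) (hhyp : IsHyperbolicDist (wordDist X))
    (H₁ H₂ : Subgroup G) (hq₁ : IsQuasiconvex X H₁)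
    (hfin₁ : ∀ n : ℕ, {h : G | h ∈ H₁ ∧ wordLength X h ≤ n}.Finite)
    (hq₂ : IsQuasiconvex X H₂) (hsep₂ : IsGeometricallySeparated X H₂) :
    ∀ R : ℝ, 0 ≤ R → ∃ r : ℝ,
      (H₁ : Set G) ∩ nbhd X R (H₂ : Set G) ⊆ nbhd X r ((H₁ : Set G) ∩ (H₂ : Set G)) ∧
      (H₁ : Set G) ∩ (H₂ : Set G) ⊆ nbhd X r ((H₁ : Set G) ∩ nbhd X R (H₂ : Set G)) := by
  intro R hR
  obtain ⟨r, hr⟩ := exists_inter_nbhd_subset_nbhd_inter hXgen hhyp hq₁ hfin₁ hq₂ hsep₂ R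
  exact ⟨max r 0, hr.trans (nbhd_mono (le_max_left _ _) _),
    (Set.inter_subset_inter_right _ (subset_nbhd hR _)).trans (subset_nbhd (le_max_right _ _) _)⟩

/-- **Algebraic intersection coincides coarsely with geometric intersection.** For every
`R ≥ 0`, the Hausdorff distance between `H₁ ∩ N_R(H₂)` and `H₁ ∩ H₂` is finite. -/
theorem coarse_intersection_eq_intersection {G : Type*} [Group G] (X : Set G)
    (hXgen : Subgroup.closure X = ⊤) (hhyp : IsHyperbolicDist (wordDist X))
    (H₁ H₂ : Subgroup G)
    (he₁ : IsHypEmbFamily X (fun _ : Fin 1 => H₁))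
    (he₂ : IsHypEmbFamily X (fun _ : Fin 1 => H₂)) :
    ∀ R : ℝ, 0 ≤ R → ∃ r : ℝ,
      (H₁ : Set G) ∩ nbhd X R (H₂ : Set G) ⊆ nbhd X r ((H₁ : Set G) ∩ (H₂ : Set G)) ∧
      (H₁ : Set G) ∩ (H₂ : Set G) ⊆ nbhd X r ((H₁ : Set G) ∩ nbhd X R (H₂ : Set G)) :=
  coarse_intersection_eq_intersection_general X hXgen hhyp H₁ H₂
    ((he₁.isUndistorted 0).isQuasiconvex hXgen hhyp) (he₁.isUndistorted 0).finite_wordLength_le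
    ((he₂.isUndistorted 0).isQuasiconvex hXgen hhyp) (he₂.isGeometricallySeparated 0)
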